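/- arXiv:2406.18393 — 5 statements merged into one kernel-verified Lean document; each statement's English description precedes it below -/
import Mathlib

section
/- Let Δt > 0 and ε > 0 satisfy Δt ≤ 2ε². Then the function F : ℝ → ℝ, F(c) = c/Δt + (c³ − c)/(2ε²), is strictly monotonically increasing on ℝ; consequently, for every r ∈ ℝ there exists a unique c ∈ ℝ with (c − r)/Δt + (c³ − c)/(2ε²) + (r³ − r)/(2ε²) = 0. -/
/-!
Writing `F c = (1/Δt - 1/(2ε²)) c + c³/(2ε²)`, the stability condition says exactly that the linear
coefficient is nonnegative, so `F` is a strictly increasing, odd, coercive function, hence a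
bijection of `ℝ`. The scheme reads `F c = r/Δt - (r³ - r)/(2ε²)`.
-/

open Filter Function

theorem surjective_of_continuous_of_odd {α β : Type*}
    [AddCommGroup α] [ConditionallyCompleteLinearOrder α] [IsOrderedAddMonoid α] [DenselyOrdered α]
    [TopologicalSpace α] [OrderTopology α]
    [AddCommGroup β] [LinearOrder β] [IsOrderedAddMonoid β]
    [TopologicalSpace β] [OrderClosedTopology β]
    {f : α → β} (hf : Continuous f) (hodd : f.Odd) (htop : Tendsto f atTop atTop) :
    Surjective f := by
  have hbot : Tendsto f atBot atBot := by
    rw [← tendsto_neg_atTop_iff]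
    simpa only [comp_def, hodd _] using htop.comp tendsto_neg_atBot_atTop
  exact hf.surjective htop hbot

theorem strictMono_mul_add_mul_pow {R : Type*} [Semiring R] [LinearOrder R] [IsStrictOrderedRing R]
    [ExistsAddOfLE R] {p q : R} {n : ℕ} (hp : 0 ≤ p) (hq : 0 < q) (hn : Odd n) :
    StrictMono fun x : R ↦ p * x + q * x ^ n :=
  (monotone_id.const_mul hp).add_strictMono (hn.strictMono_pow.const_mul hq)

theorem odd_mul_add_mul_pow {R : Type*} [Ring R] (p q : R) {n : ℕ} (hn : Odd n) :
    (fun x : R ↦ p * x + q * x ^ n).Odd := fun x ↦ by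
  simp only [hn.neg_pow, mul_neg, neg_add]

theorem tendsto_mul_add_mul_pow_atTop {K : Type*} [Semifield K] [LinearOrder K]
    [IsStrictOrderedRing K] {p q : K} {n : ℕ} (hp : 0 ≤ p) (hq : 0 < q) (hn : n ≠ 0) :
    Tendsto (fun x : K ↦ p * x + q * x ^ n) atTop atTop := by
  have hlinear : ∀ᶠ x : K in atTop, 0 ≤ p * x :=
    (eventually_ge_atTop 0).mono fun _ hx ↦ mul_nonneg hp hx
  exact (tendsto_const_mul_pow_atTop hn hq).zero_eventuallyLE_add_atTop hlinear

theorem bijective_mul_add_mul_pow {p q : ℝ} {n : ℕ} (hp : 0 ≤ p) (hq : 0 < q) (hn : Odd n) :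
    Bijective fun x : ℝ ↦ p * x + q * x ^ n :=
  ⟨(strictMono_mul_add_mul_pow hp hq hn).injective,
    surjective_of_continuous_of_odd (by fun_prop) (odd_mul_add_mul_pow p q hn)
      (tendsto_mul_add_mul_pow_atTop hp hq hn.pos.ne')⟩

/-- Under the stability condition `Δt ≤ 2ε²`, the map `c ↦ c/Δt + (c³ - c)/(2ε²)` is
strictly increasing, so each Crank–Nicolson step has a unique constant solution. -/
theorem crank_nicolson_constant_unique (Δt ε : ℝ) (hΔt : 0 < Δt) (hε : 0 < ε)
    (hstab : Δt ≤ 2 * ε ^ 2) :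
    StrictMono (fun c : ℝ => c / Δt + (c ^ 3 - c) / (2 * ε ^ 2)) ∧
    ∀ r : ℝ, ∃! c : ℝ,
      (c - r) / Δt + (c ^ 3 - c) / (2 * ε ^ 2) + (r ^ 3 - r) / (2 * ε ^ 2) = 0 := by
  have hlinear : 0 ≤ Δt⁻¹ - (2 * ε ^ 2)⁻¹ := sub_nonneg.mpr (inv_anti₀ hΔt hstab)
  have hcubic : 0 < (2 * ε ^ 2)⁻¹ := by positivity
  have hodd : Odd 3 := by decide
  have hF (c : ℝ) : c / Δt + (c ^ 3 - c) / (2 * ε ^ 2) =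
      (Δt⁻¹ - (2 * ε ^ 2)⁻¹) * c + (2 * ε ^ 2)⁻¹ * c ^ 3 := by ring
  have hscheme (r c : ℝ) :
      (c - r) / Δt + (c ^ 3 - c) / (2 * ε ^ 2) + (r ^ 3 - r) / (2 * ε ^ 2) = 0 ↔
        c / Δt + (c ^ 3 - c) / (2 * ε ^ 2) = r / Δt - (r ^ 3 - r) / (2 * ε ^ 2) := by
    constructor <;> intro h <;> linear_combination h
  simp only [hscheme, hF]
  exact ⟨strictMono_mul_add_mul_pow hlinear hcubic hodd,
    fun r ↦ (bijective_mul_add_mul_pow hlinear hcubic hodd).existsUnique _⟩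
end

section
/- Let Δt > 0 and ε > 0 with Δt ≤ 2ε², set r₁ = √(1 + 2ε²/Δt), and suppose c, r ∈ ℝ satisfy (c − r)/Δt + (c³ − c)/(2ε²) + (r³ − r)/(2ε²) = 0. Then: (i) c = 0 if and only if r ∈ {0, r₁, −r₁}; (ii) c > 0 if and only if r ∈ (0, r₁) ∪ (−∞, −r₁); (iii) c < 0 if and only if r ∈ (−r₁, 0) ∪ (r₁, ∞). -/
/-!
Write `k = 2ε² / Δt`. Clearing denominators separates the variables of the scheme:
`c (c² + (k - 1)) = r (1 + k - r²) = r (r₁² - r²)`. The condition `Δt ≤ 2ε²` says `k ≥ 1`, so the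
left-hand side has the sign of `c`, and the sign of `c` is that of an odd cubic in `r` with roots
`0, ± r₁`.
-/

section Cubic

variable {R : Type*} [CommRing R]

theorem mul_sq_sub_sq_eq_zero_iff [NoZeroDivisors R] {r s : R} :
    r * (s ^ 2 - r ^ 2) = 0 ↔ r = 0 ∨ r = s ∨ r = -s := by
  rw [mul_eq_zero, sub_eq_zero, eq_comm (a := s ^ 2), sq_eq_sq_iff_eq_or_eq_neg]

variable [LinearOrder R] [IsStrictOrderedRing R]

theorem sign_mul_sq_add {a : R} (ha : 0 ≤ a) (c : R) :
    SignType.sign (c * (c ^ 2 + a)) = SignType.sign c := by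
  obtain rfl | hc := eq_or_ne c 0
  · rw [zero_mul]
  · have hpos : 0 < c ^ 2 + a := add_pos_of_pos_of_nonneg (sq_pos_of_ne_zero hc) ha
    rw [sign_mul, sign_pos hpos, mul_one]

theorem mul_sq_sub_sq_pos_iff {r s : R} (hs : 0 ≤ s) :
    0 < r * (s ^ 2 - r ^ 2) ↔ r ∈ Set.Ioo 0 s ∨ r ∈ Set.Iio (-s) := by
  have inner : 0 < r ∧ r ^ 2 < s ^ 2 ↔ r ∈ Set.Ioo 0 s :=
    and_congr_right fun hr => sq_lt_sq₀ hr.le hs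
  have outer : r < 0 ∧ s ^ 2 < r ^ 2 ↔ r ∈ Set.Iio (-s) := by
    have sq_lt_iff (hr : r < 0) : s ^ 2 < r ^ 2 ↔ r < -s := by
      rw [← neg_sq r, sq_lt_sq₀ hs (neg_nonneg.mpr hr.le), lt_neg]
    rw [and_congr_right sq_lt_iff, Set.mem_Iio, and_iff_right_iff_imp]
    exact fun hr => hr.trans_le (neg_nonpos.mpr hs)
  rw [mul_pos_iff, sub_pos, sub_neg, inner, outer]

theorem mul_sq_sub_sq_neg_iff {r s : R} (hs : 0 ≤ s) :
    r * (s ^ 2 - r ^ 2) < 0 ↔ r ∈ Set.Ioo (-s) 0 ∨ r ∈ Set.Ioi s := by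
  have odd : -(r * (s ^ 2 - r ^ 2)) = -r * (s ^ 2 - (-r) ^ 2) := by ring
  rw [← neg_pos, odd, mul_sq_sub_sq_pos_iff hs]
  simp only [Set.mem_Ioo, Set.mem_Iio, Set.mem_Ioi, neg_pos, neg_lt (a := r), neg_neg, and_comm]

end Cubic

theorem crank_nicolson_iff_mul_sq_add_eq {K : Type*} [Field K] {τ η : K} (hτ : τ ≠ 0)
    (hη : η ≠ 0) (c r : K) :
    (c - r) / τ + (c ^ 3 - c) / η + (r ^ 3 - r) / η = 0 ↔
      c * (c ^ 2 + (η / τ - 1)) = r * (1 + η / τ - r ^ 2) := by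
  have cleared : c * (c ^ 2 + (η / τ - 1)) - r * (1 + η / τ - r ^ 2) =
      η * ((c - r) / τ + (c ^ 3 - c) / η + (r ^ 3 - r) / η) := by
    field_simp
    ring
  rw [← sub_eq_zero (a := c * _), cleared, mul_eq_zero, or_iff_right hη]

/-- Sign trichotomy for the Crank–Nicolson constant-state equation relating
`r = φⁿ` and `c = φ^{n+1}` under the stability condition `Δt ≤ 2ε²`. -/
theorem crank_nicolson_sign_trichotomy (Δt ε : ℝ) (hΔt : 0 < Δt) (hε : 0 < ε)
    (hstab : Δt ≤ 2 * ε ^ 2) (r₁ : ℝ) (hr₁ : r₁ = Real.sqrt (1 + 2 * ε ^ 2 / Δt))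
    (c r : ℝ)
    (heq : (c - r) / Δt + (c ^ 3 - c) / (2 * ε ^ 2) + (r ^ 3 - r) / (2 * ε ^ 2) = 0) :
    (c = 0 ↔ (r = 0 ∨ r = r₁ ∨ r = -r₁)) ∧
    (c > 0 ↔ (r ∈ Set.Ioo (0 : ℝ) r₁ ∨ r ∈ Set.Iio (-r₁))) ∧
    (c < 0 ↔ (r ∈ Set.Ioo (-r₁) (0 : ℝ) ∨ r ∈ Set.Ioi r₁)) := by
  have hη : 0 < 2 * ε ^ 2 := by positivity
  have hk : 0 ≤ 2 * ε ^ 2 / Δt - 1 := sub_nonneg.mpr ((one_le_div hΔt).mpr hstab)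
  have hr₁_nonneg : 0 ≤ r₁ := hr₁ ▸ Real.sqrt_nonneg _
  have hr₁_sq : r₁ ^ 2 = 1 + 2 * ε ^ 2 / Δt := by rw [hr₁, Real.sq_sqrt (by positivity)]
  have hsign : SignType.sign c = SignType.sign (r * (r₁ ^ 2 - r ^ 2)) := by
    rw [hr₁_sq, ← (crank_nicolson_iff_mul_sq_add_eq hΔt.ne' hη.ne' c r).mp heq,
      sign_mul_sq_add hk]
  refine ⟨?_, ?_, ?_⟩
  · rw [← sign_eq_zero_iff, hsign, sign_eq_zero_iff, mul_sq_sub_sq_eq_zero_iff]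
  · rw [gt_iff_lt, ← sign_eq_one_iff, hsign, sign_eq_one_iff, mul_sq_sub_sq_pos_iff hr₁_nonneg]
  · rw [← sign_eq_neg_one_iff, hsign, sign_eq_neg_one_iff, mul_sq_sub_sq_neg_iff hr₁_nonneg]
end

section
/- Let Δt > 0 and ε > 0 with Δt ≤ 2ε², and set r₁ = √(1 + 2ε²/Δt). Then there exists a unique r ∈ ℝ such that (r₁ − r)/Δt + (r₁³ − r₁)/(2ε²) + (r³ − r)/(2ε²) = 0; moreover this unique r satisfies r < −r₁. -/
/-!
Multiplied by `2ε²`, the equation is a depressed cubic `r³ - 3s²r + q = 0` with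
`3s² = 1 + 2ε²/Δt = r₁²`. Its critical points are `±s`, and its value at the local minimum `s` is
`q - 2s³`. The time-step restriction makes this value positive, so the only real root lies on the
increasing branch to the left of `-s`. The identity `r³ - 3s²r + 2s³ = (r - s)²(r + 2s)` moves the
bound further, to `r < -2s < -√3s = -r₁`.
-/

open Filter Real

section DepressedCubic

section OrderedRing

variable {R : Type*} [CommRing R] [LinearOrder R] [IsStrictOrderedRing R] {s q x : R}

theorem depressed_cubic_pos_of_neg_two_mul_le (hq : 2 * s ^ 3 < q) (hx : -(2 * s) ≤ x) :
    0 < x ^ 3 - 3 * s ^ 2 * x + q := by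
  have factor_nonneg : 0 ≤ (x - s) ^ 2 * (x + 2 * s) :=
    mul_nonneg (sq_nonneg _) (neg_le_iff_add_nonneg.mp hx)
  calc
    0 < (x - s) ^ 2 * (x + 2 * s) + (q - 2 * s ^ 3) :=
      add_pos_of_nonneg_of_pos factor_nonneg (sub_pos.mpr hq)
    _ = x ^ 3 - 3 * s ^ 2 * x + q := by ring

theorem depressed_cubic_root_lt_neg_two_mul (hq : 2 * s ^ 3 < q)
    (hx : x ^ 3 - 3 * s ^ 2 * x + q = 0) : x < -(2 * s) := by
  contrapose! hx
  exact (depressed_cubic_pos_of_neg_two_mul_le hq hx).ne'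

theorem depressed_cubic_strictMonoOn_Iic (hs : 0 ≤ s) (q : R) :
    StrictMonoOn (fun x ↦ x ^ 3 - 3 * s ^ 2 * x + q) (Set.Iic (-s)) := by
  intro x hx y hy hxy
  rw [Set.mem_Iic] at hx hy
  have sq_lt : s ^ 2 < x ^ 2 := by nlinarith
  have sq_le_mul : s ^ 2 ≤ x * y := by nlinarith
  have sq_le : s ^ 2 ≤ y ^ 2 := by nlinarith
  have slope_pos : 0 < x ^ 2 + x * y + y ^ 2 - 3 * s ^ 2 := by linarith
  have difference_pos := mul_pos (sub_pos.mpr hxy) slope_pos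
  linear_combination difference_pos

end OrderedRing

theorem surjective_cube_sub_mul (p : ℝ) : Function.Surjective fun x : ℝ ↦ x ^ 3 - p * x := by
  have factored : (fun x : ℝ ↦ x ^ 3 - p * x) = fun x ↦ x * (x * x - p) := by
    funext x
    ring
  rw [factored]
  refine Continuous.surjective (by fun_prop) ?_ ?_
  · exact tendsto_id.atTop_mul_atTop₀
      (tendsto_atTop_add_const_right _ (-p) (tendsto_id.atTop_mul_atTop₀ tendsto_id))
  · exact tendsto_id.atBot_mul_atTop₀
      (tendsto_atTop_add_const_right _ (-p) (tendsto_id.atBot_mul_atBot₀ tendsto_id))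

theorem existsUnique_depressed_cubic_root {s q : ℝ} (hs : 0 ≤ s) (hq : 2 * s ^ 3 < q) :
    ∃! x : ℝ, x ^ 3 - 3 * s ^ 2 * x + q = 0 := by
  obtain ⟨x, hx⟩ := surjective_cube_sub_mul (3 * s ^ 2) (-q)
  have mem_Iic : ∀ {y : ℝ}, y ^ 3 - 3 * s ^ 2 * y + q = 0 → y ∈ Set.Iic (-s) := fun hy ↦ by
    have := depressed_cubic_root_lt_neg_two_mul hq hy
    rw [Set.mem_Iic]
    linarith
  have x_root : x ^ 3 - 3 * s ^ 2 * x + q = 0 := eq_neg_iff_add_eq_zero.mp hx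
  exact ⟨x, x_root, fun y y_root ↦
    (depressed_cubic_strictMonoOn_Iic hs q).injOn (mem_Iic y_root) (mem_Iic x_root)
      (y_root.trans x_root.symm)⟩

end DepressedCubic

theorem crank_nicolson_eq_zero_iff {k : Type*} [Field k] [NeZero (2 : k)] {Δt ε : k}
    (hΔt : Δt ≠ 0) (hε : ε ≠ 0) (r c : k) :
    (c - r) / Δt + (c ^ 3 - c) / (2 * ε ^ 2) + (r ^ 3 - r) / (2 * ε ^ 2) = 0 ↔
      r ^ 3 - (1 + 2 * ε ^ 2 / Δt) * r + (c ^ 3 + (2 * ε ^ 2 / Δt - 1) * c) = 0 := by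
  have scale_ne_zero : 2 * ε ^ 2 ≠ 0 := mul_ne_zero two_ne_zero (pow_ne_zero 2 hε)
  have cleared : 2 * ε ^ 2 *
      ((c - r) / Δt + (c ^ 3 - c) / (2 * ε ^ 2) + (r ^ 3 - r) / (2 * ε ^ 2)) =
        r ^ 3 - (1 + 2 * ε ^ 2 / Δt) * r + (c ^ 3 + (2 * ε ^ 2 / Δt - 1) * c) := by
    field_simp
    ring
  rw [← cleared, mul_eq_zero_iff_left scale_ne_zero]

theorem two_mul_cube_lt_of_one_lt {s K : ℝ} (hs : 0 < s) (hsK : 3 * s ^ 2 = 1 + K)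
    (hK : 1 < (3 * √3 - 1) * K) :
    2 * s ^ 3 < (√3 * s) ^ 3 + (K - 1) * (√3 * s) := by
  have sqrt_three_sq : √3 ^ 2 = 3 := sq_sqrt (by norm_num)
  have K_eq : K = 3 * s ^ 2 - 1 := by linarith
  have gap_eq : (√3 * s) ^ 3 + (K - 1) * (√3 * s) - 2 * s ^ 3 =
      2 / 3 * s * ((3 * √3 - 1) * K - 1) := by
    rw [K_eq]
    linear_combination √3 * s ^ 3 * sqrt_three_sq
  have gap_pos : 0 < 2 / 3 * s * ((3 * √3 - 1) * K - 1) :=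
    mul_pos (by positivity) (sub_pos.mpr hK)
  linarith

/-- The bound on `Δt` is sharp: at equality the cubic has a double root at its local minimum. -/
theorem crank_nicolson_unique_preimage_of_r1_general (Δt ε : ℝ) (hΔt : 0 < Δt)
    (hstab : Δt < (3 * √3 - 1) * (2 * ε ^ 2)) (r₁ : ℝ) (hr₁ : r₁ = √(1 + 2 * ε ^ 2 / Δt)) :
    (∃! r : ℝ,
      (r₁ - r) / Δt + (r₁ ^ 3 - r₁) / (2 * ε ^ 2) + (r ^ 3 - r) / (2 * ε ^ 2) = 0) ∧
    (∀ r : ℝ,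
      (r₁ - r) / Δt + (r₁ ^ 3 - r₁) / (2 * ε ^ 2) + (r ^ 3 - r) / (2 * ε ^ 2) = 0 →
      r < -r₁) := by
  have hε : ε ≠ 0 := by
    rintro rfl
    linarith
  simp only [crank_nicolson_eq_zero_iff hΔt.ne' hε]
  have hK : 1 < (3 * √3 - 1) * (2 * ε ^ 2 / Δt) := by
    rwa [← mul_div_assoc, one_lt_div hΔt]
  obtain ⟨s, s_pos, r₁_eq⟩ : ∃ s, 0 < s ∧ r₁ = √3 * s :=
    ⟨r₁ / √3, by rw [hr₁]; positivity, by field_simp⟩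
  have three_mul_sq : 3 * s ^ 2 = 1 + 2 * ε ^ 2 / Δt := by
    rw [← sq_sqrt (show 0 ≤ 1 + 2 * ε ^ 2 / Δt by positivity), ← hr₁, r₁_eq, mul_pow,
      sq_sqrt (by norm_num)]
  have hq := two_mul_cube_lt_of_one_lt s_pos three_mul_sq hK
  rw [← three_mul_sq, r₁_eq]
  refine ⟨existsUnique_depressed_cubic_root s_pos.le hq, fun r hr ↦ ?_⟩
  have sqrt_three_lt_two : √3 < 2 := (sqrt_lt' two_pos).mpr (by norm_num)
  exact (depressed_cubic_root_lt_neg_two_mul hq hr).trans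
    (neg_lt_neg (mul_lt_mul_of_pos_right sqrt_three_lt_two s_pos))

/-- For `c = r₁` the Crank–Nicolson constant-state equation has a unique real
solution `r`, and it satisfies `r < -r₁`. -/
theorem crank_nicolson_unique_preimage_of_r1 (Δt ε : ℝ) (hΔt : 0 < Δt) (hε : 0 < ε)
    (hstab : Δt ≤ 2 * ε ^ 2) (r₁ : ℝ) (hr₁ : r₁ = Real.sqrt (1 + 2 * ε ^ 2 / Δt)) :
    (∃! r : ℝ,
      (r₁ - r) / Δt + (r₁ ^ 3 - r₁) / (2 * ε ^ 2) + (r ^ 3 - r) / (2 * ε ^ 2) = 0) ∧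
    (∀ r : ℝ,
      (r₁ - r) / Δt + (r₁ ^ 3 - r₁) / (2 * ε ^ 2) + (r ^ 3 - r) / (2 * ε ^ 2) = 0 →
      r < -r₁) := by
  have one_lt_sqrt_three : 1 < √3 := lt_sqrt_of_sq_lt (by norm_num)
  exact crank_nicolson_unique_preimage_of_r1_general Δt ε hΔt
    (hstab.trans_lt (lt_mul_of_one_lt_left (by positivity) (by linarith))) r₁ hr₁
end

section
/- Let Δt > 0, ε > 0 and r ∈ ℝ. Then the function G : ℝ → ℝ, G(c) = (c − r)/Δt + (r + c)(r² + c²)/(4ε²) − r/ε², is strictly monotonically increasing on ℝ; consequently, for every r ∈ ℝ there exists a unique c ∈ ℝ with (c − r)/Δt + (r + c)(r² + c²)/(4ε²) − r/ε² = 0. No restriction on Δt is required. -/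
/-!
For `c ≠ r` the implicit term `(r + c)(r² + c²)` is the secant slope `(c⁴ - r⁴)/(c - r)` of the
convex function `x⁴`, hence monotone in `c`, while the term `-r/ε²` coming from the concave part is
explicit, hence constant in `c`. The scheme is therefore an implicit Euler step
`(c - r)/Δt + f c = 0` with `f` monotone, and such a step is uniquely solvable for every `Δt > 0`.
-/

open Filter

section OrderedRing

variable {R : Type*} [CommRing R] [LinearOrder R] [IsStrictOrderedRing R]

lemma monotone_add_mul_sq_add_sq (r : R) :
    Monotone fun c : R => (r + c) * (r ^ 2 + c ^ 2) := by
  intro a b hab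
  have two_mul_diff : 2 * ((r + b) * (r ^ 2 + b ^ 2) - (r + a) * (r ^ 2 + a ^ 2)) =
      (b - a) * ((a + b) ^ 2 + (a + r) ^ 2 + (b + r) ^ 2) := by
    ring
  have diff_nonneg : 0 ≤ (b - a) * ((a + b) ^ 2 + (a + r) ^ 2 + (b + r) ^ 2) :=
    mul_nonneg (sub_nonneg.2 hab) (by positivity)
  rw [← two_mul_diff] at diff_nonneg
  exact sub_nonneg.1 (nonneg_of_mul_nonneg_right diff_nonneg two_pos)

end OrderedRing

section OrderedField

variable {K : Type*} [Field K] [LinearOrder K] [IsStrictOrderedRing K] {f : K → K} {τ : K}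

lemma strictMono_sub_div_add (hf : Monotone f) (hτ : 0 < τ) (r : K) :
    StrictMono fun c => (c - r) / τ + f c :=
  ((OrderIso.subRight r).strictMono.div_const hτ).add_monotone hf

lemma tendsto_sub_div_add_atTop (hf : Monotone f) (hτ : 0 < τ) (r : K) :
    Tendsto (fun c => (c - r) / τ + f c) atTop atTop :=
  tendsto_atTop_add_right_of_le' _ (f r)
    ((OrderIso.subRight r).tendsto_atTop.atTop_div_const hτ)
    ((eventually_ge_atTop r).mono fun _ hc => hf hc)

lemma tendsto_sub_div_add_atBot (hf : Monotone f) (hτ : 0 < τ) (r : K) :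
    Tendsto (fun c => (c - r) / τ + f c) atBot atBot :=
  tendsto_atBot_add_right_of_ge' _ (f r)
    ((OrderIso.subRight r).tendsto_atBot.atBot_div_const hτ)
    ((eventually_le_atBot r).mono fun _ hc => hf hc)

end OrderedField

lemma bijective_sub_div_add {f : ℝ → ℝ} {τ : ℝ} (hf : Monotone f) (hcont : Continuous f)
    (hτ : 0 < τ) (r : ℝ) : Function.Bijective fun c => (c - r) / τ + f c :=
  ⟨(strictMono_sub_div_add hf hτ r).injective,
    Continuous.surjective (by fun_prop) (tendsto_sub_div_add_atTop hf hτ r)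
      (tendsto_sub_div_add_atBot hf hτ r)⟩

/-- Unconditional stability of the convex splitting of the modified Crank–Nicolson
scheme at constant states: for every `Δt > 0` the map
`c ↦ (c - r)/Δt + (r + c)(r² + c²)/(4ε²) - r/ε²` is strictly increasing and has a
unique zero. -/
theorem convex_splitting_constant_unique (Δt ε : ℝ) (hΔt : 0 < Δt) (hε : 0 < ε)
    (r : ℝ) :
    StrictMono (fun c : ℝ =>
      (c - r) / Δt + (r + c) * (r ^ 2 + c ^ 2) / (4 * ε ^ 2) - r / ε ^ 2) ∧
    ∀ r : ℝ, ∃! c : ℝ,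
      (c - r) / Δt + (r + c) * (r ^ 2 + c ^ 2) / (4 * ε ^ 2) - r / ε ^ 2 = 0 := by
  have monotone_reaction (s : ℝ) :
      Monotone fun c : ℝ => (s + c) * (s ^ 2 + c ^ 2) / (4 * ε ^ 2) - s / ε ^ 2 :=
    fun _ _ hab => sub_le_sub_right
      ((monotone_add_mul_sq_add_sq s).div_const (by positivity) hab) _
  simp only [add_sub_assoc]
  exact ⟨strictMono_sub_div_add (monotone_reaction r) hΔt r, fun s =>
    (bijective_sub_div_add (monotone_reaction s) (by fun_prop) hΔt s).existsUnique 0⟩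
end

section
/- Let Δt > 0 and ε > 0 with Δt < 4ε², and set q = √(1 + 4ε²/Δt). Then there exists a unique φ ∈ ℝ such that φ − (Δt/(4ε²))·(φ³ − φ) = 2q; moreover this unique φ satisfies φ < −q. -/
/-!
Put `a = Δt / (4ε²)` and `m = q / √3`. As `a q² = a + 1`, the stage equation becomes
`φ (3m² - φ²) = 2q / a`. The cubic on the left has its local maximum `2m³` at `m` and takes this
value again at `-2m`; to the left of `-m` it decreases strictly from `+∞`. So a level above `2m³` is
attained exactly once, at a point left of `-2m`. The level `2q / a` lies above `2m³` precisely when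
`a + 1 < 3√3`, which is negativity of the discriminant of the stage equation.
-/

section Cubic

variable {m c x : ℝ}

lemma mul_three_mul_sq_sub_sq_le (hx : -(2 * m) ≤ x) : x * (3 * m ^ 2 - x ^ 2) ≤ 2 * m ^ 3 := by
  have hgap : 2 * m ^ 3 - x * (3 * m ^ 2 - x ^ 2) = (x - m) ^ 2 * (x + 2 * m) := by ring
  rw [← sub_nonneg, hgap]
  exact mul_nonneg (sq_nonneg _) (by linarith)

lemma lt_neg_two_mul_of_mul_three_mul_sq_sub_sq_eq (hc : 2 * m ^ 3 < c)
    (hx : x * (3 * m ^ 2 - x ^ 2) = c) : x < -(2 * m) := by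
  contrapose! hc
  exact hx ▸ mul_three_mul_sq_sub_sq_le hc

lemma strictAntiOn_mul_three_mul_sq_sub_sq (hm : 0 ≤ m) :
    StrictAntiOn (fun x : ℝ ↦ x * (3 * m ^ 2 - x ^ 2)) (Set.Iic (-m)) := by
  intro x _ y (hy : y ≤ -m) hxy
  have hfactor : x * (3 * m ^ 2 - x ^ 2) - y * (3 * m ^ 2 - y ^ 2) =
      (y - x) * (x ^ 2 + x * y + y ^ 2 - 3 * m ^ 2) := by ring
  have hyy : m ^ 2 ≤ y ^ 2 := by nlinarith
  have hxy_mul : y ^ 2 ≤ x * y := by nlinarith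
  have hxx : y ^ 2 < x ^ 2 := by nlinarith
  change y * (3 * m ^ 2 - y ^ 2) < x * (3 * m ^ 2 - x ^ 2)
  rw [← sub_pos, hfactor]
  exact mul_pos (sub_pos.2 hxy) (by linarith)

lemma exists_mul_three_mul_sq_sub_sq_eq (hm : 0 < m) (hc : 2 * m ^ 3 ≤ c) :
    ∃ x : ℝ, x * (3 * m ^ 2 - x ^ 2) = c := by
  have hc_nonneg : 0 ≤ c := le_trans (by positivity) hc
  set t := 2 * m + c / m ^ 2
  have ht : 2 * m ≤ t := le_add_of_nonneg_right (by positivity)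
  have hleft : c ≤ -t * (3 * m ^ 2 - (-t) ^ 2) := calc
    c = c / m ^ 2 * m ^ 2 := by field_simp
    _ ≤ t * m ^ 2 := by gcongr; exact le_add_of_nonneg_left (by positivity)
    _ ≤ t * (t ^ 2 - 3 * m ^ 2) := by gcongr; nlinarith
    _ = -t * (3 * m ^ 2 - (-t) ^ 2) := by ring
  have hright : -(2 * m) * (3 * m ^ 2 - (-(2 * m)) ^ 2) ≤ c := by linarith
  have hcont : ContinuousOn (fun x : ℝ ↦ x * (3 * m ^ 2 - x ^ 2)) (Set.Icc (-t) (-(2 * m))) := by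
    fun_prop
  obtain ⟨x, -, hx⟩ := intermediate_value_Icc' (neg_le_neg ht) hcont ⟨hright, hleft⟩
  exact ⟨x, hx⟩

lemma existsUnique_mul_three_mul_sq_sub_sq_eq (hm : 0 < m) (hc : 2 * m ^ 3 < c) :
    ∃! x : ℝ, x * (3 * m ^ 2 - x ^ 2) = c := by
  obtain ⟨x, hx⟩ := exists_mul_three_mul_sq_sub_sq_eq hm hc.le
  have root_mem {z : ℝ} (hz : z * (3 * m ^ 2 - z ^ 2) = c) : z ∈ Set.Iic (-m) := by
    have := lt_neg_two_mul_of_mul_three_mul_sq_sub_sq_eq hc hz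
    exact Set.mem_Iic.2 (by linarith)
  exact ⟨x, hx, fun y hy ↦ (strictAntiOn_mul_three_mul_sq_sub_sq hm.le).injOn
    (root_mem hy) (root_mem hx) (hy.trans hx.symm)⟩

end Cubic

section Stage

variable {a q : ℝ}

lemma stage_eq_iff_mul_three_mul_sq_sub_sq_eq (ha : a ≠ 0) (haq : a * q ^ 2 = a + 1) (b φ : ℝ) :
    φ - a * (φ ^ 3 - φ) = b ↔ φ * (3 * (q / √3) ^ 2 - φ ^ 2) = b / a := by
  have hm : 3 * (q / √3) ^ 2 = q ^ 2 := by
    rw [div_pow, Real.sq_sqrt zero_le_three]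
    ring
  have hstage : φ - a * (φ ^ 3 - φ) = φ * (q ^ 2 - φ ^ 2) * a := by
    linear_combination -φ * haq
  rw [hm, eq_div_iff ha, hstage]

lemma two_mul_div_sqrt_three_pow_three_lt (ha : 0 < a) (hq : 0 < q) (haq : a * q ^ 2 = a + 1)
    (hdisc : a + 1 < 3 * √3) : 2 * (q / √3) ^ 3 < 2 * q / a := by
  have hsqrt : √3 ^ 3 = 3 * √3 := by rw [pow_succ, Real.sq_sqrt zero_le_three]
  rw [lt_div_iff₀ ha]
  calc
    2 * (q / √3) ^ 3 * a = 2 * q * ((a + 1) / (3 * √3)) := by rw [div_pow, hsqrt, ← haq]; ring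
    _ < 2 * q * 1 := by gcongr; exact (div_lt_one (by positivity)).2 hdisc
    _ = 2 * q := mul_one _

lemma le_two_mul_div_sqrt_three (hq : 0 ≤ q) : q ≤ 2 * (q / √3) := by
  have hsqrt : √(3 : ℝ) ≤ 2 := Real.sqrt_le_iff.2 (by norm_num)
  rw [← mul_div_assoc, le_div_iff₀ (by positivity), mul_comm 2 q]
  gcongr

end Stage

theorem dirk_unique_stage_solution_general (Δt ε : ℝ) (hΔt : 0 < Δt)
    (hdisc : Δt < (3 * √3 - 1) * (4 * ε ^ 2)) (q : ℝ) (hq : q = √(1 + 4 * ε ^ 2 / Δt)) :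
    (∃! φ : ℝ, φ - Δt / (4 * ε ^ 2) * (φ ^ 3 - φ) = 2 * q) ∧
    (∀ φ : ℝ, φ - Δt / (4 * ε ^ 2) * (φ ^ 3 - φ) = 2 * q → φ < -(2 * (q / √3))) := by
  have hε : ε ≠ 0 := by
    rintro rfl
    norm_num at hdisc
    linarith
  have hq_pos : 0 < q := by rw [hq]; positivity
  have haq : Δt / (4 * ε ^ 2) * q ^ 2 = Δt / (4 * ε ^ 2) + 1 := by
    rw [hq, Real.sq_sqrt (by positivity)]
    field_simp
  have ha : 0 < Δt / (4 * ε ^ 2) := by positivity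
  have ha_lt : Δt / (4 * ε ^ 2) < 3 * √3 - 1 := (div_lt_iff₀ (by positivity)).2 hdisc
  have hlevel := two_mul_div_sqrt_three_pow_three_lt ha hq_pos haq (by linarith)
  simp only [stage_eq_iff_mul_three_mul_sq_sub_sq_eq ha.ne' haq]
  exact ⟨existsUnique_mul_three_mul_sq_sub_sq_eq (by positivity) hlevel,
    fun φ ↦ lt_neg_two_mul_of_mul_three_mul_sq_sub_sq_eq hlevel⟩

/-- For `Δt < 4ε²` and `q = √(1 + 4ε²/Δt)`, the equation
`φ - (Δt/(4ε²))(φ³ - φ) = 2q` has a unique real solution, and it satisfies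
`φ < -q`. -/
theorem dirk_unique_stage_solution (Δt ε : ℝ) (hΔt : 0 < Δt) (hε : 0 < ε)
    (hstab : Δt < 4 * ε ^ 2) (q : ℝ) (hq : q = Real.sqrt (1 + 4 * ε ^ 2 / Δt)) :
    (∃! φ : ℝ, φ - Δt / (4 * ε ^ 2) * (φ ^ 3 - φ) = 2 * q) ∧
    (∀ φ : ℝ, φ - Δt / (4 * ε ^ 2) * (φ ^ 3 - φ) = 2 * q → φ < -q) := by
  have hsqrt : 1 ≤ √(3 : ℝ) := Real.one_le_sqrt.2 (by norm_num)
  have hq_le : q ≤ 2 * (q / √3) := le_two_mul_div_sqrt_three (hq ▸ Real.sqrt_nonneg _)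
  obtain ⟨hunique, hlt⟩ := dirk_unique_stage_solution_general Δt ε hΔt (by nlinarith) q hq
  exact ⟨hunique, fun φ hφ ↦ (hlt φ hφ).trans_le (neg_le_neg hq_le)⟩
end
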